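/- Let F : ℂ³ → ℂ be the homogeneous quartic F(x,y,z) = (x² + y² − z²)(x² + 2y² − z²), whose projective zero locus is the union of two smooth conics in ℙ²(ℂ) that are tangent to each other at exactly the two points [1:0:1] and [−1:0:1]. Let C ⊆ ℙ²(ℂ) be the set of points [v] with v ∈ ℂ³ \ {0} and F(v) = 0, and let U = ℙ²(ℂ) \ C. Then for every basepoint u ∈ U, the fundamental group π₁(U, u) is isomorphic to the presented group ⟨a, b | (ab)², (ba)²⟩, i.e. the group with presentation ⟨a, b | (ab)² = (ba)² = e⟩. -/

import Mathlib

/-- The quotient topology on the complex projective plane `ℙ²(ℂ)`, i.e. the quotient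
topology induced from `ℂ³ \ {0}` by the projectivization map. -/
instance : TopologicalSpace (Projectivization ℂ (Fin 3 → ℂ)) :=
  inferInstanceAs (TopologicalSpace (Quotient (projectivizationSetoid ℂ (Fin 3 → ℂ))))

/-- The homogeneous quartic whose zero locus is the union of the two tangent conics
`x² + y² = z²` and `x² + 2y² = z²`. -/
noncomputable def F (v : Fin 3 → ℂ) : ℂ :=
  ((v 0) ^ 2 + (v 1) ^ 2 - (v 2) ^ 2) * ((v 0) ^ 2 + 2 * (v 1) ^ 2 - (v 2) ^ 2)

/-- The projective curve `C ⊆ ℙ²(ℂ)` defined by `F = 0`. -/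
noncomputable def C : Set (Projectivization ℂ (Fin 3 → ℂ)) :=
  {p | ∃ (v : Fin 3 → ℂ) (hv : v ≠ 0), F v = 0 ∧ p = Projectivization.mk ℂ v hv}

/-- The complement `U = ℙ²(ℂ) \ C`. -/
noncomputable def U : Set (Projectivization ℂ (Fin 3 → ℂ)) := Cᶜ

/-- The relators `(ab)²` and `(ba)²` of the presentation `⟨a, b | (ab)² = (ba)² = e⟩`. -/
def rels : Set (FreeGroup (Fin 2)) :=
  {(FreeGroup.of 0 * FreeGroup.of 1) ^ 2, (FreeGroup.of 1 * FreeGroup.of 0) ^ 2}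

namespace TangentConics

open Set Topology
open scoped unitInterval

section Cover

variable {X : Type*} [TopologicalSpace X]

/-- An induction principle for homotopy classes of paths: a family of sets of classes which is
stable under concatenation with paths lying in one member of an open cover contains everything. -/
theorem mk_mem_of_open_cover {ι : Type*} {V : ι → Set X} (hV : ∀ i, IsOpen (V i))
    (hcov : ∀ x, ∃ i, x ∈ V i) {x₀ : X} (K : ∀ x, Set (Path.Homotopic.Quotient x₀ x))
    (h₀ : Path.Homotopic.Quotient.refl x₀ ∈ K x₀)
    (hK : ∀ i {x y : X} (p : Path x y), (∀ t, p t ∈ V i) →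
      ∀ k ∈ K x, k.trans (.mk p) ∈ K y)
    {x : X} (γ : Path x₀ x) : Path.Homotopic.Quotient.mk γ ∈ K x := by
  obtain ⟨t, t0, tmono, ⟨N, hN⟩, tV⟩ :=
    exists_monotone_Icc_subset_open_cover_unitInterval (c := fun i ↦ γ ⁻¹' V i)
      (fun i ↦ (hV i).preimage γ.continuous)
      (fun s _ ↦ by simpa using hcov (γ s))
  have key : ∀ n, Path.Homotopic.Quotient.mk ((γ.subpath 0 (t n)).cast γ.source.symm rfl) ∈
      K (γ (t n)) := by
    intro n
    induction n with
    | zero =>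
      have : ∀ s : I, s = 0 →
          Path.Homotopic.Quotient.mk ((γ.subpath 0 s).cast γ.source.symm rfl) ∈ K (γ s) := by
        rintro s rfl
        have h : ∀ (y : X) (hy : y = x₀) (p : Path x₀ y), (∀ s, p s = x₀) →
            Path.Homotopic.Quotient.mk p ∈ K y := by
          rintro y rfl p hp
          have : p = Path.refl _ := by ext s; simp [hp]
          rw [this]
          exact h₀
        exact h _ γ.source _ (fun s ↦ by simp)
      exact this _ t0
    | succ n ih =>
      obtain ⟨i, hi⟩ := tV n
      have := hK i (γ.subpath (t n) (t (n + 1))) (fun s ↦ by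
        have : γ.subpath (t n) (t (n + 1)) s ∈ range (γ.subpath (t n) (t (n + 1))) := ⟨s, rfl⟩
        rw [Path.range_subpath_of_le _ _ _ (tmono n.le_succ)] at this
        obtain ⟨u, hu, hu'⟩ := this
        rw [← hu']
        exact hi hu) _ ih
      rw [← Path.Homotopic.Quotient.mk_trans] at this
      convert this using 1
      rw [Path.Homotopic.Quotient.eq]
      exact ⟨((Path.Homotopy.subpathTransSubpath γ 0 (t n) (t (n + 1))).pathCast
        γ.source.symm rfl).symm⟩
  have hlast : ∀ s : I, s = 1 →
      Path.Homotopic.Quotient.mk ((γ.subpath 0 s).cast γ.source.symm rfl) ∈ K (γ s) →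
      Path.Homotopic.Quotient.mk γ ∈ K x := by
    rintro s rfl h
    have h' : ∀ (y : X) (hy : y = x) (p : Path x₀ y), (∀ s, p s = γ s) →
        Path.Homotopic.Quotient.mk p ∈ K y → Path.Homotopic.Quotient.mk γ ∈ K x := by
      rintro y rfl p hp hpK
      have : p = γ := by ext s; exact hp s
      rwa [← this]
    exact h' _ γ.target _ (fun s ↦ by simp) h
  exact hlast _ (hN N le_rfl) (key N)

/-- A criterion for a subgroup of the fundamental group to be everything, given an open cover
whose members have base points joined to `x₀`, such that paths in a member with endpoints in
another one deform into the intersection, and such that `H` contains the loops formed by passing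
from one member to another. -/
theorem subgroup_eq_top_of_open_cover {ι : Type*} [LinearOrder ι] {V : ι → Set X}
    (hV : ∀ i, IsOpen (V i)) (hcov : ∀ x, ∃ i, x ∈ V i) {x₀ : X}
    (H : Subgroup (FundamentalGroup X x₀)) (b : ι → X) (r : ∀ i, Path x₀ (b i))
    (hL : ∀ i j, i ≠ j → ∀ {x y : X} (p : Path x y), (∀ t, p t ∈ V i) → x ∈ V j → y ∈ V j →
      ∃ q : Path x y, (∀ t, q t ∈ V i ∩ V j) ∧ Path.Homotopic.Quotient.mk p = .mk q)
    (hE : ∀ i j, i < j → (V i ∩ V j).Nonempty → ∃ m ∈ V i ∩ V j, ∃ (p : Path (b i) m)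
      (q : Path (b j) m), (∀ t, p t ∈ V i) ∧ (∀ t, q t ∈ V j) ∧ ∃ h ∈ H,
        (Path.Homotopic.Quotient.mk (r i)).trans (.mk p) =
          h.toPath.trans ((Path.Homotopic.Quotient.mk (r j)).trans (.mk q)))
    (i₀ : ι) (p₀ : Path (b i₀) x₀) (hp₀ : ∀ t, p₀ t ∈ V i₀)
    (hend : ∀ p : Path (b i₀) x₀, (∀ t, p t ∈ V i₀) →
      FundamentalGroup.fromPath ((Path.Homotopic.Quotient.mk (r i₀)).trans (.mk p)) ∈ H) :
    H = ⊤ := by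
  have hE' : ∀ i j, i ≠ j → (V i ∩ V j).Nonempty → ∃ m ∈ V i ∩ V j, ∃ (p : Path (b i) m)
      (q : Path (b j) m), (∀ t, p t ∈ V i) ∧ (∀ t, q t ∈ V j) ∧ ∃ h ∈ H,
        (Path.Homotopic.Quotient.mk (r i)).trans (.mk p) =
          h.toPath.trans ((Path.Homotopic.Quotient.mk (r j)).trans (.mk q)) := by
    intro i j hij hne
    rcases lt_or_gt_of_ne hij with h | h
    · exact hE i j h hne
    · obtain ⟨m, hm, p, q, hp, hq, g, hg, e⟩ := hE j i h (by rwa [inter_comm])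
      refine ⟨m, hm.symm, q, p, hq, hp, g⁻¹, H.inv_mem hg, ?_⟩
      rw [e, FundamentalGroup.inv_def]
      change _ = Path.Homotopic.Quotient.trans (Path.Homotopic.Quotient.symm g)
        (Path.Homotopic.Quotient.trans g _)
      rw [← Path.Homotopic.Quotient.trans_assoc, Path.Homotopic.Quotient.symm_trans,
        Path.Homotopic.Quotient.refl_trans]
  have hov : ∀ i j x, x ∈ V i → x ∈ V j → ∀ p : Path (b i) x, (∀ t, p t ∈ V i) →
      ∃ h ∈ H, ∃ q : Path (b j) x, (∀ t, q t ∈ V j) ∧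
        (Path.Homotopic.Quotient.mk (r i)).trans (.mk p) =
          h.toPath.trans ((Path.Homotopic.Quotient.mk (r j)).trans (.mk q)) := by
    intro i j x hi hj p hp
    rcases eq_or_ne i j with rfl | hij
    · refine ⟨1, H.one_mem, p, hp, ?_⟩
      change _ = Path.Homotopic.Quotient.trans (Path.Homotopic.Quotient.refl _) _
      rw [Path.Homotopic.Quotient.refl_trans]
    · obtain ⟨m, hm, pi, pj, hpi, hpj, h, hh, e⟩ := hE' i j hij ⟨x, hi, hj⟩
      obtain ⟨q, hq, hpq⟩ := hL i j hij (pi.symm.trans p) (fun t ↦ by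
        rw [Path.trans_apply]
        split_ifs
        · exact hpi _
        · exact hp _) hm.2 hj
      refine ⟨h, hh, pj.trans q, fun t ↦ by
        rw [Path.trans_apply]
        split_ifs
        · exact hpj _
        · exact (hq _).2, ?_⟩
      rw [Path.Homotopic.Quotient.mk_trans, ← hpq, Path.Homotopic.Quotient.mk_trans,
        Path.Homotopic.Quotient.mk_symm,
        ← Path.Homotopic.Quotient.trans_assoc (Path.Homotopic.Quotient.mk (r j)),
        ← Path.Homotopic.Quotient.trans_assoc h.toPath, ← e, Path.Homotopic.Quotient.trans_assoc,
        ← Path.Homotopic.Quotient.trans_assoc (Path.Homotopic.Quotient.mk pi),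
        Path.Homotopic.Quotient.trans_symm,
        Path.Homotopic.Quotient.refl_trans]
  let K : ∀ x, Set (Path.Homotopic.Quotient x₀ x) := fun x ↦ {k | ∀ i, x ∈ V i →
    ∃ h ∈ H, ∃ p : Path (b i) x,
    (∀ t, p t ∈ V i) ∧ k = h.toPath.trans ((Path.Homotopic.Quotient.mk (r i)).trans (.mk p))}
  have hKi : ∀ i x (k : Path.Homotopic.Quotient x₀ x), x ∈ V i → (∃ h ∈ H, ∃ p : Path (b i) x,
      (∀ t, p t ∈ V i) ∧ k = h.toPath.trans
        ((Path.Homotopic.Quotient.mk (r i)).trans (.mk p))) → k ∈ K x := by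
    rintro i x k hx ⟨h, hh, p, hp, rfl⟩ j hj
    obtain ⟨h', hh', q, hq, e⟩ := hov i j x hx hj p hp
    refine ⟨h' * h, H.mul_mem hh' hh, q, hq, ?_⟩
    rw [e, ← Path.Homotopic.Quotient.trans_assoc]
    rfl
  rw [eq_top_iff]
  rintro g -
  obtain ⟨γ, rfl⟩ := Path.Homotopic.Quotient.mk_surjective g
  have hx₀ : x₀ ∈ V i₀ := by simpa using hp₀ 1
  have hmem := mk_mem_of_open_cover hV hcov K ?_ ?_ γ
  · obtain ⟨h, hh, p, hp, e⟩ := hmem i₀ hx₀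
    rw [e]
    exact H.mul_mem (hend p hp) hh
  · refine hKi i₀ _ _ hx₀ ⟨_, H.inv_mem (hend p₀ hp₀), p₀, hp₀, ?_⟩
    exact (Path.Homotopic.Quotient.symm_trans _).symm
  · intro i x y p hp k hk
    obtain ⟨h, hh, q, hq, e⟩ := hk i (by simpa using hp 0)
    refine hKi i _ _ (by simpa using hp 1) ⟨h, hh, q.trans p, fun t ↦ by
        rw [Path.trans_apply]
        split_ifs
        · exact hq _
        · exact hp _, ?_⟩
    rw [e, Path.Homotopic.Quotient.mk_trans, Path.Homotopic.Quotient.trans_assoc,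
      Path.Homotopic.Quotient.trans_assoc]

theorem mk_eq_mk_of_simplyConnectedSpace {V : Set X} [SimplyConnectedSpace V] {x y : X}
    (p q : Path x y) (hp : ∀ t, p t ∈ V) (hq : ∀ t, q t ∈ V) :
    Path.Homotopic.Quotient.mk p = .mk q := by
  let lift (p : Path x y) (hp : ∀ t, p t ∈ V) : Path (⟨x, by simpa using hp 0⟩ : V)
      ⟨y, by simpa using hp 1⟩ :=
    ⟨⟨fun t ↦ ⟨p t, hp t⟩, by fun_prop⟩, by simp, by simp⟩
  exact Path.Homotopic.Quotient.eq.2 ((SimplyConnectedSpace.paths_homotopic (lift p hp)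
    (lift q hq)).map
    ⟨Subtype.val, continuous_subtype_val⟩)

end Cover

/-- The affine surface `u * v + y ^ 2 = 1`, `y ^ 2 + 1 ≠ 0`, which is a double cover of the
complement of the two conics. -/
abbrev DoubleCover : Type :=
  {p : ℂ × ℂ × ℂ // p.1 * p.2.1 + p.2.2 ^ 2 = 1 ∧ p.2.2 ^ 2 + 1 ≠ 0}

namespace DoubleCover

/-- The first coordinate. -/
def u (x : DoubleCover) : ℂ := x.1.1

/-- The second coordinate. -/
def v (x : DoubleCover) : ℂ := x.1.2.1

/-- The third coordinate. -/
def y (x : DoubleCover) : ℂ := x.1.2.2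

@[fun_prop] theorem continuous_u : Continuous u := by unfold u; fun_prop
@[fun_prop] theorem continuous_v : Continuous v := by unfold v; fun_prop
@[fun_prop] theorem continuous_y : Continuous y := by unfold y; fun_prop

theorem u_mul_v (x : DoubleCover) : x.u * x.v = 1 - x.y ^ 2 :=
  eq_sub_of_add_eq x.2.1

theorem y_sq_add_one_ne_zero (x : DoubleCover) : x.y ^ 2 + 1 ≠ 0 := x.2.2

@[ext] theorem ext {x x' : DoubleCover} (hu : x.u = x'.u) (hv : x.v = x'.v) (hy : x.y = x'.y) :
    x = x' :=
  Subtype.ext (Prod.ext hu (Prod.ext hv hy))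

/-- The point of the double cover with prescribed nonzero first coordinate and prescribed third
coordinate. -/
noncomputable def graph (u y : ℂ) (hu : u ≠ 0) (hy : y ^ 2 + 1 ≠ 0) : DoubleCover :=
  ⟨(u, (1 - y ^ 2) / u, y), by simp only; field_simp; ring, hy⟩

@[simp] theorem graph_u (u y : ℂ) (hu hy) : (graph u y hu hy).u = u := rfl
@[simp] theorem graph_v (u y : ℂ) (hu hy) : (graph u y hu hy).v = (1 - y ^ 2) / u := rfl
@[simp] theorem graph_y (u y : ℂ) (hu hy) : (graph u y hu hy).y = y := rfl

theorem graph_eq (x : DoubleCover) (hu : x.u ≠ 0) :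
    graph x.u x.y hu x.y_sq_add_one_ne_zero = x := by
  ext
  · rfl
  · rw [graph_v, ← u_mul_v]; field_simp
  · rfl

theorem continuous_graph {Z : Type*} [TopologicalSpace Z] {f g : Z → ℂ} (hf : Continuous f)
    (hg : Continuous g) (hf' : ∀ z, f z ≠ 0) (hg' : ∀ z, g z ^ 2 + 1 ≠ 0) :
    Continuous fun z ↦ graph (f z) (g z) (hf' z) (hg' z) := by
  unfold graph
  fun_prop (disch := assumption)

theorem u_ne_zero {x : DoubleCover} (h : x.y ^ 2 ≠ 1) : x.u ≠ 0 := by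
  intro h0
  have := x.u_mul_v
  rw [h0, zero_mul] at this
  exact h (by linear_combination this)

instance : Neg DoubleCover :=
  ⟨fun x ↦ ⟨-x.1, by simpa [neg_mul_neg] using x.2⟩⟩

@[simp] theorem neg_u (x : DoubleCover) : (-x).u = -x.u := rfl
@[simp] theorem neg_v (x : DoubleCover) : (-x).v = -x.v := rfl
@[simp] theorem neg_y (x : DoubleCover) : (-x).y = -x.y := rfl

theorem neg_neg' (x : DoubleCover) : - -x = x := Subtype.ext (neg_neg _)

@[fun_prop] theorem continuous_neg : Continuous (fun x : DoubleCover ↦ -x) :=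
  Continuous.subtype_mk (by fun_prop) _

end DoubleCover

open DoubleCover

/-- The open sector with apex `-1` bisected by the ray towards `+∞`. -/
def sector : Set ℂ := {y | y.im - y.re < 1} ∩ {y | -y.im - y.re < 1}

theorem isOpen_sector : IsOpen sector :=
  (isOpen_lt (by fun_prop) continuous_const).inter (isOpen_lt (by fun_prop) continuous_const)

theorem convex_sector : Convex ℝ sector :=
  (convex_halfSpace_lt (f := fun y : ℂ ↦ y.im - y.re)
    ⟨fun _ _ ↦ by simp; ring, fun _ _ ↦ by simp; ring⟩ 1).inter
  (convex_halfSpace_lt (f := fun y : ℂ ↦ -y.im - y.re)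
    ⟨fun _ _ ↦ by simp; ring, fun _ _ ↦ by simp; ring⟩ 1)

theorem sq_add_one_ne_zero_iff {y : ℂ} : y ^ 2 + 1 ≠ 0 ↔ y ≠ Complex.I ∧ y ≠ -Complex.I := by
  have : y ^ 2 + 1 = (y - Complex.I) * (y + Complex.I) := by
    linear_combination Complex.I_sq
  rw [this, mul_ne_zero_iff, sub_ne_zero, ← sub_neg_eq_add, sub_ne_zero]

theorem sq_add_one_ne_zero_of_mem_sector {y : ℂ} (h : y ∈ sector) : y ^ 2 + 1 ≠ 0 := by
  rw [sq_add_one_ne_zero_iff]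
  constructor <;> rintro rfl <;> simp [sector] at h

theorem one_add_ne_zero_of_mem_sector {y : ℂ} (h : y ∈ sector) : 1 + y ≠ 0 := by
  intro h0
  obtain rfl : y = -1 := by linear_combination h0
  simp [sector] at h

/-- Planar coordinates on the part of the double cover lying over a sector. -/
noncomputable def sectorHomeomorph (ε : ℂ) (hε : ε * ε = 1) :
    {w : ℂ × ℂ | 1 - w.1 * w.2 ∈ sector} ≃ₜ {x : DoubleCover | ε * x.y ∈ sector} where
  toFun w := ⟨⟨(w.1.1, w.1.2 * (2 - w.1.1 * w.1.2), ε * (1 - w.1.1 * w.1.2)), by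
    refine ⟨by simp only; linear_combination (1 - w.1.1 * w.1.2) ^ 2 * hε, ?_⟩
    have := sq_add_one_ne_zero_of_mem_sector w.2
    contrapose! this
    simp only at this
    linear_combination this - (1 - w.1.1 * w.1.2) ^ 2 * hε⟩, by
    have : ε * (ε * (1 - w.1.1 * w.1.2)) = 1 - w.1.1 * w.1.2 := by rw [← mul_assoc, hε, one_mul]
    exact (congrArg (· ∈ sector) this).mpr w.2⟩
  invFun x := ⟨(x.1.u, x.1.v / (1 + ε * x.1.y)), by
    have h := one_add_ne_zero_of_mem_sector x.2
    have : 1 - x.1.u * (x.1.v / (1 + ε * x.1.y)) = ε * x.1.y := by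
      field_simp
      linear_combination - x.1.u_mul_v - x.1.y ^ 2 * hε
    exact (congrArg (· ∈ sector) this).mpr x.2⟩
  left_inv w := by
    have h := one_add_ne_zero_of_mem_sector w.2
    ext
    · rfl
    · simp only [DoubleCover.v, DoubleCover.y, ← mul_assoc, hε]
      rw [one_mul, div_eq_iff h]
      ring
  right_inv x := by
    have h := one_add_ne_zero_of_mem_sector x.2
    have e : x.1.u * (x.1.v / (1 + ε * x.1.y)) = 1 - ε * x.1.y := by
      field_simp
      linear_combination x.1.u_mul_v + x.1.y ^ 2 * hε
    apply Subtype.ext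
    ext
    · rfl
    · change x.1.v / (1 + ε * x.1.y) * (2 - x.1.u * (x.1.v / (1 + ε * x.1.y))) = x.1.v
      rw [e]
      field_simp
      ring
    · change ε * (1 - x.1.u * (x.1.v / (1 + ε * x.1.y))) = x.1.y
      rw [e]
      linear_combination x.1.y * hε
  continuous_toFun := by fun_prop
  continuous_invFun := by
    have : ∀ x : {x : DoubleCover | ε * x.y ∈ sector}, 1 + ε * x.1.y ≠ 0 :=
      fun x ↦ one_add_ne_zero_of_mem_sector x.2
    fun_prop (disch := assumption)

theorem simplyConnectedSpace_sector (ε : ℂ) (hε : ε * ε = 1) :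
    SimplyConnectedSpace {x : DoubleCover | ε * x.y ∈ sector} := by
  have h1 : (1 : ℂ) ∈ sector := by simp [sector]
  have : StarConvex ℝ (0 : ℂ × ℂ) {w : ℂ × ℂ | 1 - w.1 * w.2 ∈ sector} := by
    rw [starConvex_zero_iff]
    intro w hw t ht0 ht1
    have := convex_sector h1 hw (sub_nonneg.2 (pow_le_one₀ ht0 ht1 (n := 2))) (sq_nonneg t)
      (by ring)
    have e : 1 - (t • w).1 * (t • w).2 =
        (1 - t ^ 2 : ℝ) • (1 : ℂ) + (t ^ 2 : ℝ) • (1 - w.1 * w.2) := by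
      simp only [Prod.smul_fst, Prod.smul_snd, Complex.real_smul]
      push_cast
      ring
    exact (congrArg (· ∈ sector) e).mpr this
  have := this.contractibleSpace ⟨0, by simpa using h1⟩
  have := (sectorHomeomorph ε hε).symm.contractibleSpace
  infer_instance

theorem joinedIn_preimage_convex {E : Set ℂ} (hE : Convex ℝ E) (h1 : ∀ y ∈ E, y ^ 2 ≠ 1)
    (h2 : ∀ y ∈ E, y ^ 2 + 1 ≠ 0) {x x' : DoubleCover} (hx : x.y ∈ E) (hx' : x'.y ∈ E) :
    JoinedIn (DoubleCover.y ⁻¹' E) x x' := by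
  have hu := u_ne_zero (h1 _ hx)
  have hu' := u_ne_zero (h1 _ hx')
  obtain ⟨p, hp⟩ := (isPathConnected_compl_singleton_of_one_lt_rank (E := ℂ) (by simp)
    0).joinedIn x.u hu x'.u hu'
  have hl : ∀ t : I, AffineMap.lineMap x.y x'.y (t : ℝ) ∈ E := fun t ↦
    hE.segment_subset hx hx' (by
      rw [segment_eq_image_lineMap]; exact ⟨t, t.2, rfl⟩)
  refine ⟨⟨⟨fun t ↦ graph (p t) (AffineMap.lineMap x.y x'.y (t : ℝ)) (hp t) (h2 _ (hl t)),
    continuous_graph p.continuous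
      (AffineMap.lineMap_continuous.comp continuous_subtype_val) _ _⟩, ?_, ?_⟩, fun t ↦ hl t⟩
  · simp [graph_eq]
  · simp [graph_eq]

/-- If the third coordinate of a path avoids `±1`, it can be replaced by a segment. -/
theorem exists_homotopic_segment {E : Set ℂ} (hE : Convex ℝ E) (h1 : ∀ y ∈ E, y ^ 2 ≠ 1)
    (h2 : ∀ y ∈ E, y ^ 2 + 1 ≠ 0) {x x' : DoubleCover} (p : Path x x') (hp : ∀ t, (p t).y ∈ E) :
    ∃ q : Path x x', (∀ t, (q t).y ∈ segment ℝ x.y x'.y) ∧ p.Homotopic q := by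
  have hx : x.y ∈ E := by simpa using hp 0
  have hx' : x'.y ∈ E := by simpa using hp 1
  have hl : ∀ t : I, AffineMap.lineMap x.y x'.y (t : ℝ) ∈ segment ℝ x.y x'.y := fun t ↦ by
    rw [segment_eq_image_lineMap]; exact ⟨t, t.2, rfl⟩
  have hlE := fun t ↦ hE.segment_subset hx hx' (hl t)
  have hu : ∀ t, (p t).u ≠ 0 := fun t ↦ u_ne_zero (h1 _ (hp t))
  have hu0 : x.u ≠ 0 := u_ne_zero (h1 _ hx)
  have hu1 : x'.u ≠ 0 := u_ne_zero (h1 _ hx')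
  have hH : ∀ s t : I, AffineMap.lineMap (p t).y
      (AffineMap.lineMap x.y x'.y (t : ℝ)) (s : ℝ) ∈ E := fun s t ↦
    hE.segment_subset (hp t) (hlE t) (by rw [segment_eq_image_lineMap]; exact ⟨s, s.2, rfl⟩)
  refine ⟨⟨⟨fun t ↦ graph (p t).u (AffineMap.lineMap x.y x'.y (t : ℝ)) (hu t) (h2 _ (hlE t)),
    continuous_graph (by fun_prop) (AffineMap.lineMap_continuous.comp continuous_subtype_val) _ _⟩,
    ?_, ?_⟩, hl, ⟨⟨⟨⟨fun st ↦ graph (p st.2).u (AffineMap.lineMap (p st.2).y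
      (AffineMap.lineMap x.y x'.y (st.2 : ℝ)) (st.1 : ℝ)) (hu _) (h2 _ (hH _ _)), ?_⟩,
      ?_, ?_⟩, ?_⟩⟩⟩
  · simp [graph_eq]
  · simp [graph_eq]
  · refine continuous_graph (by fun_prop) ?_ _ _
    simp only [AffineMap.lineMap_apply_module]
    fun_prop
  · intro t
    simp [graph_eq _ (hu t)]
  · intro t
    simp
  · rintro s t (rfl | rfl)
    · simp [graph_eq]
    · simp [graph_eq]

open DoubleCover

/-- A cover of `ℂ \ {I, -I}` by four convex open sets. -/
def piece : Fin 4 → Set ℂ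
  | 0 => sector
  | 1 => {y | -y ∈ sector}
  | 2 => {y | 1 < y.im}
  | 3 => {y | y.im < -1}

theorem isOpen_piece : ∀ i, IsOpen (piece i)
  | 0 => isOpen_sector
  | 1 => isOpen_sector.preimage (f := fun y : ℂ ↦ -y) (by fun_prop)
  | 2 => isOpen_lt continuous_const Complex.continuous_im
  | 3 => isOpen_lt Complex.continuous_im continuous_const

theorem convex_piece : ∀ i, Convex ℝ (piece i)
  | 0 => convex_sector
  | 1 => convex_sector.is_linear_preimage (f := fun y ↦ -y) IsLinearMap.isLinearMap_neg
  | 2 => convex_halfSpace_im_gt 1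
  | 3 => convex_halfSpace_im_lt (-1)

theorem sq_add_one_ne_zero_of_mem_piece : ∀ {i} {y : ℂ}, y ∈ piece i → y ^ 2 + 1 ≠ 0
  | 0, _, h => sq_add_one_ne_zero_of_mem_sector h
  | 1, y, h => by simpa using sq_add_one_ne_zero_of_mem_sector (y := -y) h
  | 2, y, h => by
    rw [sq_add_one_ne_zero_iff]
    constructor <;> rintro rfl <;> norm_num [piece] at h
  | 3, y, h => by
    rw [sq_add_one_ne_zero_iff]
    constructor <;> rintro rfl <;> norm_num [piece] at h

theorem exists_mem_piece {y : ℂ} (hy : y ^ 2 + 1 ≠ 0) : ∃ i, y ∈ piece i := by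
  rw [sq_add_one_ne_zero_iff] at hy
  by_contra! h
  have h0 := h 0
  have h1 := h 1
  have h2 := h 2
  have h3 := h 3
  simp only [piece, sector, mem_inter_iff, mem_ofPred_eq, Complex.neg_im, Complex.neg_re,
    not_and_or, not_lt] at h0 h1 h2 h3
  have hre : y.re = 0 := by
    rcases h0 with h0 | h0 <;> rcases h1 with h1 | h1 <;> linarith
  rcases h0 with h0 | h0
  · exact hy.1 (Complex.ext (by simpa using hre) (by simp; linarith))
  · exact hy.2 (Complex.ext (by simpa using hre) (by simp; linarith))

theorem sq_ne_one_of_mem_piece {i : Fin 4} {y : ℂ} (hy : y ∈ piece i) (h0 : i = 0 → y ≠ 1)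
    (h1 : i = 1 → y ≠ -1) : y ^ 2 ≠ 1 := by
  intro h
  rcases sq_eq_one_iff.1 h with rfl | rfl <;> fin_cases i <;>
    first
    | exact h0 rfl rfl
    | exact h1 rfl rfl
    | norm_num [piece, sector] at hy

theorem sq_ne_one_of_mem_piece_inter {i j : Fin 4} (hij : i ≠ j) {y : ℂ}
    (hy : y ∈ piece i ∩ piece j) : y ^ 2 ≠ 1 := by
  by_cases hi : 2 ≤ i
  · exact sq_ne_one_of_mem_piece hy.1 (by rintro rfl; simp at hi) (by rintro rfl; simp at hi)
  · by_cases hj : 2 ≤ j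
    · exact sq_ne_one_of_mem_piece hy.2 (by rintro rfl; simp at hj) (by rintro rfl; simp at hj)
    · have : y ∈ piece 0 ∧ y ∈ piece 1 := by
        obtain ⟨rfl, rfl⟩ | ⟨rfl, rfl⟩ : (i = 0 ∧ j = 1) ∨ (i = 1 ∧ j = 0) := by omega
        exacts [hy, hy.symm]
      refine sq_ne_one_of_mem_piece this.1 ?_ (by simp)
      rintro - rfl
      norm_num [piece, sector] at this

theorem sector_mk_eq_mk {x x' : DoubleCover} (p q : Path x x') {i : Fin 4} (hi : i < 2)
    (hp : ∀ t, (p t).y ∈ piece i) (hq : ∀ t, (q t).y ∈ piece i) :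
    Path.Homotopic.Quotient.mk p = .mk q := by
  fin_cases i
  · have := simplyConnectedSpace_sector 1 (by norm_num)
    exact mk_eq_mk_of_simplyConnectedSpace (V := {x | 1 * x.y ∈ sector}) p q
      (by simpa [piece] using hp) (by simpa [piece] using hq)
  · have := simplyConnectedSpace_sector (-1) (by norm_num)
    exact mk_eq_mk_of_simplyConnectedSpace (V := {x | -1 * x.y ∈ sector}) p q
      (by simpa [piece] using hp) (by simpa [piece] using hq)
  · simp at hi
  · simp at hi

theorem exists_path_inter {i j : Fin 4} (hij : i ≠ j) {x x' : DoubleCover} (p : Path x x')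
    (hp : ∀ t, (p t).y ∈ piece i) (hx : x.y ∈ piece j) (hx' : x'.y ∈ piece j) :
    ∃ q : Path x x', (∀ t, (q t).y ∈ piece i ∩ piece j) ∧
      Path.Homotopic.Quotient.mk p = .mk q := by
  have h0 : x.y ∈ piece i := by simpa using hp 0
  have h1 : x'.y ∈ piece i := by simpa using hp 1
  rcases lt_or_ge i 2 with hi | hi
  · obtain ⟨q, hq⟩ := joinedIn_preimage_convex ((convex_piece i).inter (convex_piece j))
      (fun y hy ↦ sq_ne_one_of_mem_piece_inter hij hy)
      (fun y hy ↦ sq_add_one_ne_zero_of_mem_piece hy.1) (x := x) (x' := x') ⟨h0, hx⟩ ⟨h1, hx'⟩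
    exact ⟨q, hq, sector_mk_eq_mk p q hi hp fun t ↦ (hq t).1⟩
  · obtain ⟨q, hq, h⟩ := exists_homotopic_segment (convex_piece i)
      (fun y hy ↦ sq_ne_one_of_mem_piece hy (by rintro rfl; simp at hi)
        (by rintro rfl; simp at hi))
      (fun y hy ↦ sq_add_one_ne_zero_of_mem_piece hy) p hp
    exact ⟨q, fun t ↦ ((convex_piece i).inter (convex_piece j)).segment_subset ⟨h0, hx⟩
      ⟨h1, hx'⟩ (hq t), Path.Homotopic.Quotient.eq.2 h⟩

/-- The section `y ↦ (1, 1 - y ^ 2, y)` of the third coordinate. -/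
noncomputable def sec (y : ℂ) (hy : y ^ 2 + 1 ≠ 0) : DoubleCover := graph 1 y one_ne_zero hy

@[simp] theorem sec_y (y : ℂ) (hy) : (sec y hy).y = y := rfl

/-- The lift of a segment along the section `sec`. -/
noncomputable def secPath (y y' : ℂ) (h : ∀ z ∈ segment ℝ y y', z ^ 2 + 1 ≠ 0) :
    Path (sec y (h _ (left_mem_segment ℝ y y'))) (sec y' (h _ (right_mem_segment ℝ y y'))) where
  toFun t := sec (AffineMap.lineMap y y' (t : ℝ))
    (h _ (by rw [segment_eq_image_lineMap]; exact ⟨t, t.2, rfl⟩))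
  continuous_toFun := continuous_graph continuous_const
    (AffineMap.lineMap_continuous.comp continuous_subtype_val) _ _
  source' := by simp
  target' := by simp

theorem secPath_mem {y y' : ℂ} {E : Set ℂ} (hE : Convex ℝ E) (hy : y ∈ E) (hy' : y' ∈ E) (h)
    (t : I) : (secPath y y' h t).y ∈ E :=
  hE.segment_subset hy hy' (by
    rw [segment_eq_image_lineMap]; exact ⟨t, t.2, rfl⟩)

/-- The endpoint of the segment bounding the right half of the basic loop. -/
def right : ℂ := ⟨2, 2⟩

/-- The endpoint of the segment bounding the left half of the basic loop. -/
def left : ℂ := ⟨-2, 2⟩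

theorem right_mem_zero : right ∈ piece 0 := by norm_num [right, piece, sector]
theorem right_mem_two : right ∈ piece 2 := by norm_num [right, piece]
theorem left_mem_one : left ∈ piece 1 := by norm_num [left, piece, sector]
theorem left_mem_two : left ∈ piece 2 := by norm_num [left, piece]
theorem neg_right_mem_one : -right ∈ piece 1 := by norm_num [right, piece, sector]
theorem neg_right_mem_three : -right ∈ piece 3 := by norm_num [right, piece]
theorem neg_left_mem_zero : -left ∈ piece 0 := by norm_num [left, piece, sector]
theorem neg_left_mem_three : -left ∈ piece 3 := by norm_num [left, piece]
theorem zero_mem_zero : (0 : ℂ) ∈ piece 0 := by norm_num [piece, sector]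
theorem zero_mem_one : (0 : ℂ) ∈ piece 1 := by norm_num [piece, sector]

theorem neg_mem_piece_one {y : ℂ} : -y ∈ piece 1 ↔ y ∈ piece 0 := by simp [piece]
theorem neg_mem_piece_zero {y : ℂ} : -y ∈ piece 0 ↔ y ∈ piece 1 := Iff.rfl
theorem neg_mem_piece_three {y : ℂ} : -y ∈ piece 3 ↔ y ∈ piece 2 := by simp [piece]

/-- The base point `(1, 1, 0)`. -/
noncomputable def basePt : DoubleCover := sec 0 (by norm_num)

/-- The point of the section over `right`. -/
noncomputable def rightPt : DoubleCover :=
  sec right (sq_add_one_ne_zero_of_mem_piece right_mem_zero)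

/-- The point of the section over `left`. -/
noncomputable def leftPt : DoubleCover :=
  sec left (sq_add_one_ne_zero_of_mem_piece left_mem_one)

/-- The lift of the segment from `0` to `right`. -/
noncomputable def rightPath : Path basePt rightPt :=
  secPath 0 right fun _ hz ↦ sq_add_one_ne_zero_of_mem_piece
    ((convex_piece 0).segment_subset zero_mem_zero right_mem_zero hz)

/-- The lift of the segment from `0` to `left`. -/
noncomputable def leftPath : Path basePt leftPt :=
  secPath 0 left fun _ hz ↦ sq_add_one_ne_zero_of_mem_piece
    ((convex_piece 1).segment_subset zero_mem_one left_mem_one hz)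

/-- The lift of the segment from `right` to `left`. -/
noncomputable def topPath : Path rightPt leftPt :=
  secPath right left fun _ hz ↦ sq_add_one_ne_zero_of_mem_piece
    ((convex_piece 2).segment_subset right_mem_two left_mem_two hz)

/-- The loop based at `basePt` whose third coordinate winds around `I`. -/
noncomputable def windingLoop : Path basePt basePt :=
  (leftPath.trans topPath.symm).trans rightPath.symm

/-- A half turn from `basePt` to its antipode. -/
noncomputable def halfTurn : Path basePt (-basePt) where
  toFun t := graph (Complex.exp (t * Real.pi * Complex.I)) 0 (Complex.exp_ne_zero _) (by norm_num)
  continuous_toFun := continuous_graph (by fun_prop) continuous_const _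
    fun _ ↦ by norm_num
  source' := by simp [basePt, sec]
  target' := by ext <;> simp [basePt, sec]

@[simp] theorem halfTurn_y (t : I) : (halfTurn t).y = 0 := rfl

/-- Transport of a path along the antipodal map. -/
noncomputable def negPath {x x' : DoubleCover} (p : Path x x') : Path (-x) (-x') :=
  p.map DoubleCover.continuous_neg

@[simp] theorem negPath_apply {x x' : DoubleCover} (p : Path x x') (t : I) :
    negPath p t = -p t := rfl

/-- Base points for the four pieces. -/
noncomputable def pieceBase : Fin 4 → DoubleCover
  | 0 => basePt
  | 1 => basePt
  | 2 => rightPt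
  | 3 => -rightPt

/-- Paths from the global base point to the base points of the pieces. -/
noncomputable def pathToPieceBase : ∀ i, Path basePt (pieceBase i)
  | 0 => Path.refl _
  | 1 => Path.refl _
  | 2 => rightPath
  | 3 => halfTurn.trans (negPath rightPath)

theorem symm_trans_trans {X : Type*} [TopologicalSpace X] {x y z : X}
    (p : Path.Homotopic.Quotient x y) (q : Path.Homotopic.Quotient y z) :
    p.symm.trans (p.trans q) = q := by
  rw [← Path.Homotopic.Quotient.trans_assoc, Path.Homotopic.Quotient.symm_trans,
    Path.Homotopic.Quotient.refl_trans]

theorem mk_eq_mk_trans {X : Type*} [TopologicalSpace X] {a b c : X} (p : Path a b)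
    (q : Path c b) (r : Path a c) :
    Path.Homotopic.Quotient.mk p = (Path.Homotopic.Quotient.mk
      ((p.trans q.symm).trans r.symm)).trans ((Path.Homotopic.Quotient.mk r).trans (.mk q)) := by
  simp only [Path.Homotopic.Quotient.mk_trans, Path.Homotopic.Quotient.mk_symm,
    Path.Homotopic.Quotient.trans_assoc, symm_trans_trans, Path.Homotopic.Quotient.symm_trans,
    Path.Homotopic.Quotient.trans_refl]

theorem mk_trans_eq_mk_trans {X : Type*} [TopologicalSpace X] {x a b c : X} (k : Path x a)
    (p : Path a b) (q : Path c b) (r : Path a c) :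
    Path.Homotopic.Quotient.mk (k.trans p) = (Path.Homotopic.Quotient.mk
      ((k.trans ((p.trans q.symm).trans r.symm)).trans k.symm)).trans
        ((Path.Homotopic.Quotient.mk (k.trans r)).trans (.mk q)) := by
  simp only [Path.Homotopic.Quotient.mk_trans, Path.Homotopic.Quotient.mk_symm,
    Path.Homotopic.Quotient.trans_assoc, symm_trans_trans, Path.Homotopic.Quotient.symm_trans,
    Path.Homotopic.Quotient.trans_refl]

theorem forall_trans_mem {X : Type*} [TopologicalSpace X] {S : Set X} {x y z : X} {p : Path x y}
    {q : Path y z} (hp : ∀ t, p t ∈ S) (hq : ∀ t, q t ∈ S) (t : I) : p.trans q t ∈ S := by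
  rw [Path.trans_apply]
  split_ifs
  · exact hp _
  · exact hq _

/-- The fundamental group of the double cover is generated by the winding loop and the conjugate
of its antipode by the half turn. -/
theorem subgroup_eq_top (H : Subgroup (FundamentalGroup DoubleCover basePt))
    (h₁ : FundamentalGroup.fromPath (.mk windingLoop) ∈ H)
    (h₂ : FundamentalGroup.fromPath
      (.mk ((halfTurn.trans (negPath windingLoop)).trans halfTurn.symm)) ∈ H) : H = ⊤ := by
  refine subgroup_eq_top_of_open_cover (V := fun i ↦ DoubleCover.y ⁻¹' piece i)
    (fun i ↦ (isOpen_piece i).preimage continuous_y)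
    (fun x ↦ exists_mem_piece x.y_sq_add_one_ne_zero) H pieceBase pathToPieceBase
    (fun i j hij x x' p hp hx hx' ↦ exists_path_inter hij p hp hx hx') ?_ 0 (Path.refl _)
    (fun t ↦ zero_mem_zero) ?_
  · intro i j hij hne
    have : (i = 0 ∧ j = 1) ∨ (i = 0 ∧ j = 2) ∨ (i = 0 ∧ j = 3) ∨ (i = 1 ∧ j = 2) ∨
      (i = 1 ∧ j = 3) ∨ (i = 2 ∧ j = 3) := by clear hne; decide +revert
    obtain ⟨rfl, rfl⟩ | ⟨rfl, rfl⟩ | ⟨rfl, rfl⟩ | ⟨rfl, rfl⟩ | ⟨rfl, rfl⟩ | ⟨rfl, rfl⟩ := this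
    · refine ⟨basePt, ⟨zero_mem_zero, zero_mem_one⟩, Path.refl _, Path.refl _,
        fun t ↦ zero_mem_zero, fun t ↦ zero_mem_one, 1, H.one_mem, ?_⟩
      exact (Path.Homotopic.Quotient.refl_trans _).symm
    · refine ⟨rightPt, ⟨right_mem_zero, right_mem_two⟩, rightPath, Path.refl _,
        secPath_mem (convex_piece 0) zero_mem_zero right_mem_zero _, fun t ↦ right_mem_two,
        1, H.one_mem, ?_⟩
      refine (Path.Homotopic.Quotient.refl_trans _).trans ?_
      refine .trans ?_ (Path.Homotopic.Quotient.refl_trans _).symm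
      exact (Path.Homotopic.Quotient.trans_refl _).symm
    · refine ⟨-leftPt, ⟨neg_left_mem_zero, neg_left_mem_three⟩, halfTurn.trans (negPath leftPath),
        negPath topPath, ?_, ?_, _, h₂, ?_⟩
      · exact forall_trans_mem (S := DoubleCover.y ⁻¹' piece 0) (fun t ↦ zero_mem_zero)
          fun t ↦ neg_mem_piece_zero.2
            (secPath_mem (convex_piece 1) zero_mem_one left_mem_one _ t)
      · exact fun t ↦ neg_mem_piece_three.2
          (secPath_mem (convex_piece 2) right_mem_two left_mem_two _ t)
      · refine (Path.Homotopic.Quotient.refl_trans _).trans ?_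
        have := mk_trans_eq_mk_trans halfTurn (negPath leftPath) (negPath topPath)
          (negPath rightPath)
        simp only [windingLoop, negPath, Path.map_trans] at this ⊢
        exact this
    · refine ⟨leftPt, ⟨left_mem_one, left_mem_two⟩, leftPath, topPath,
        secPath_mem (convex_piece 1) zero_mem_one left_mem_one _,
        secPath_mem (convex_piece 2) right_mem_two left_mem_two _, _, h₁, ?_⟩
      refine (Path.Homotopic.Quotient.refl_trans _).trans ?_
      exact mk_eq_mk_trans leftPath topPath rightPath
    · refine ⟨-rightPt, ⟨neg_right_mem_one, neg_right_mem_three⟩,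
        halfTurn.trans (negPath rightPath), Path.refl _, ?_, fun t ↦ neg_right_mem_three, 1,
        H.one_mem, ?_⟩
      · exact forall_trans_mem (S := DoubleCover.y ⁻¹' piece 1) (fun t ↦ zero_mem_one)
          fun t ↦ neg_mem_piece_one.2
            (secPath_mem (convex_piece 0) zero_mem_zero right_mem_zero _ t)
      · refine (Path.Homotopic.Quotient.refl_trans _).trans ?_
        refine .trans ?_ (Path.Homotopic.Quotient.refl_trans _).symm
        exact (Path.Homotopic.Quotient.trans_refl _).symm
    · obtain ⟨x, h, h'⟩ := hne
      simp only [piece, mem_preimage, mem_ofPred_eq] at h h'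
      linarith
  · intro p hp
    rw [show Path.Homotopic.Quotient.mk p = .refl _ from
      sector_mk_eq_mk p (Path.refl _) (i := 0) (by decide) hp fun t ↦ zero_mem_zero]
    exact (congrArg (· ∈ H) (Path.Homotopic.Quotient.refl_trans _)).mpr H.one_mem

theorem DoubleCover.ne_neg (x : DoubleCover) : x ≠ -x := by
  intro h
  have hu : x.u = 0 := self_eq_neg.1 (congrArg u h)
  have hy : x.y = 0 := self_eq_neg.1 (congrArg y h)
  simpa [hu, hy] using x.u_mul_v

instance : MulAction ℤˣ DoubleCover where
  smul g x := ⟨((g : ℤ) : ℂ) • x.1, by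
    rcases Int.units_eq_one_or g with rfl | rfl <;> simpa using x.2⟩
  one_smul x := Subtype.ext (by change (((1 : ℤˣ) : ℤ) : ℂ) • x.1 = x.1; simp)
  mul_smul g g' x := Subtype.ext (by
    change (((g * g' : ℤˣ) : ℤ) : ℂ) • x.1 = ((g : ℤ) : ℂ) • ((g' : ℤ) : ℂ) • x.1
    push_cast
    rw [mul_smul])

theorem units_smul_eq (g : ℤˣ) (x : DoubleCover) : g • x = if g = 1 then x else -x := by
  rcases Int.units_eq_one_or g with rfl | rfl
  · simp
  · rw [if_neg (by decide)]
    refine Subtype.ext ?_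
    change (((-1 : ℤˣ) : ℤ) : ℂ) • x.1 = -x.1
    simp

/-- The first quadratic form. -/
def form (w : Fin 3 → ℂ) : ℂ := w 0 ^ 2 + w 1 ^ 2 - w 2 ^ 2

theorem F_eq (w : Fin 3 → ℂ) : F w = form w * (form w + w 1 ^ 2) := by
  unfold F form
  ring

theorem form_smul (c : ℂ) (w : Fin 3 → ℂ) : form (c • w) = c ^ 2 * form w := by
  simp [form]; ring

theorem F_smul (c : ℂ) (w : Fin 3 → ℂ) : F (c • w) = c ^ 4 * F w := by
  simp [F]; ring

theorem mk_mem_U {w : Fin 3 → ℂ} (hw : w ≠ 0) : Projectivization.mk ℂ w hw ∈ U ↔ F w ≠ 0 := by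
  refine not_congr ⟨?_, fun h ↦ ⟨w, hw, h, rfl⟩⟩
  rintro ⟨w', hw', h, e⟩
  obtain ⟨c, rfl⟩ := (Projectivization.mk_eq_mk_iff' ℂ _ _ _ _).1 e
  rw [F_smul, h, mul_zero]

namespace DoubleCover

/-- Homogeneous coordinates of the image of a point of the double cover. -/
noncomputable def toVec (x : DoubleCover) : Fin 3 → ℂ := ![(x.u + x.v) / 2, x.y, (x.v - x.u) / 2]

@[fun_prop] theorem continuous_toVec : Continuous toVec := by
  unfold toVec
  fun_prop

theorem form_toVec (x : DoubleCover) : form x.toVec = 1 := by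
  simp [form, toVec]
  linear_combination x.u_mul_v

theorem F_toVec (x : DoubleCover) : F x.toVec = x.y ^ 2 + 1 := by
  rw [F_eq, form_toVec, one_mul, add_comm]
  rfl

theorem toVec_ne_zero (x : DoubleCover) : x.toVec ≠ 0 := by
  intro h
  simpa [h, form] using x.form_toVec

theorem toVec_neg (x : DoubleCover) : (-x).toVec = -x.toVec := by
  ext i
  fin_cases i <;> simp [toVec] <;> ring

theorem toVec_injective : Function.Injective toVec := by
  intro x x' h
  have h0 := congrFun h 0
  have h1 := congrFun h 1
  have h2 := congrFun h 2
  simp only [toVec, Matrix.cons_val_zero, Matrix.cons_val_one, Matrix.cons_val] at h0 h1 h2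
  ext
  · linear_combination h0 - h2
  · linear_combination h0 + h2
  · exact h1

/-- The double cover of the complement of the two conics. -/
noncomputable def toU (x : DoubleCover) : U :=
  ⟨Projectivization.mk ℂ x.toVec x.toVec_ne_zero,
    (mk_mem_U _).2 (x.F_toVec.symm ▸ x.y_sq_add_one_ne_zero)⟩

theorem toU_eq_iff {x x' : DoubleCover} : x.toU = x'.toU ↔ x = x' ∨ x = -x' := by
  constructor
  · intro h
    obtain ⟨c, hc⟩ := (Projectivization.mk_eq_mk_iff' ℂ _ _ _ _).1 (congrArg Subtype.val h)
    have : c ^ 2 = 1 := by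
      have := x.form_toVec
      rwa [← hc, form_smul, form_toVec, mul_one] at this
    rcases sq_eq_one_iff.1 this with rfl | rfl
    · exact .inl (toVec_injective (by simpa using hc.symm))
    · exact .inr (toVec_injective (by simpa [toVec_neg] using hc.symm))
  · rintro (rfl | rfl)
    · rfl
    · refine Subtype.ext ((Projectivization.mk_eq_mk_iff' ℂ _ _ _ _).2 ⟨-1, ?_⟩)
      simp [toVec_neg]

@[simp] theorem toU_neg (x : DoubleCover) : (-x).toU = x.toU := toU_eq_iff.2 (.inr rfl)

/-- The point of the affine quadric with prescribed image under `toVec`. -/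
def coords (w : Fin 3 → ℂ) : ℂ × ℂ × ℂ := (w 0 - w 2, w 0 + w 2, w 1)

theorem toVec_mk (w : Fin 3 → ℂ) (h) : toVec ⟨coords w, h⟩ = w := by
  ext i
  fin_cases i <;> simp [toVec, u, v, y, coords]

theorem coords_mem {w : Fin 3 → ℂ} (h1 : form w = 1) (h2 : F w ≠ 0) :
    (coords w).1 * (coords w).2.1 + (coords w).2.2 ^ 2 = 1 ∧ (coords w).2.2 ^ 2 + 1 ≠ 0 := by
  rw [F_eq, h1, one_mul] at h2
  refine ⟨?_, by simpa [coords, add_comm] using h2⟩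
  rw [← h1]
  simp only [coords, form]
  ring

theorem exists_toU_eq {w : Fin 3 → ℂ} (hw : w ≠ 0) (hF : F w ≠ 0) {c : ℂ} (hc : c ^ 2 = form w) :
    ∃ x : DoubleCover, x.1 = coords (c⁻¹ • w) ∧ (x.toU : Projectivization ℂ (Fin 3 → ℂ)) =
      Projectivization.mk ℂ w hw := by
  have hc0 : c ≠ 0 := by
    rintro rfl
    apply hF
    rw [F_eq, ← hc]
    ring
  refine ⟨⟨coords (c⁻¹ • w), coords_mem ?_ ?_⟩, rfl, ?_⟩
  · rw [form_smul, ← hc]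
    field_simp
  · rw [F_smul]
    exact mul_ne_zero (pow_ne_zero _ (inv_ne_zero hc0)) hF
  · exact (Projectivization.mk_eq_mk_iff' ℂ _ _ _ _).2 ⟨c⁻¹, by rw [toVec_mk]⟩

theorem surjective_toU : Function.Surjective toU := by
  rintro ⟨p, hp⟩
  induction p using Projectivization.ind with
  | h w hw =>
    obtain ⟨c, hc⟩ := IsAlgClosed.exists_pow_nat_eq (form w) two_pos
    obtain ⟨x, -, hx⟩ := exists_toU_eq hw ((mk_mem_U hw).1 hp) hc
    exact ⟨x, Subtype.ext hx⟩

theorem continuous_projectivization_mk {Z : Type*} [TopologicalSpace Z] {f : Z → Fin 3 → ℂ}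
    (hf : Continuous f) (hf' : ∀ z, f z ≠ 0) :
    Continuous fun z ↦ Projectivization.mk ℂ (f z) (hf' z) :=
  continuous_quotient_mk'.comp (hf.subtype_mk hf')

@[fun_prop] theorem continuous_toU : Continuous toU :=
  (continuous_projectivization_mk continuous_toVec _).subtype_mk _

theorem continuous_form : Continuous form := by
  unfold form
  fun_prop

theorem form_ne_zero {w : Fin 3 → ℂ} (hF : F w ≠ 0) : form w ≠ 0 :=
  left_ne_zero_of_mul (F_eq w ▸ hF)

theorem continuous_F : Continuous F := by
  unfold F
  fun_prop

theorem isQuotientMap_toU : IsQuotientMap toU := by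
  refine ⟨isCoinducing_iff.2 fun S ↦ ⟨fun h ↦ ?_, fun h ↦ h.preimage continuous_toU⟩,
    surjective_toU⟩
  obtain ⟨O, hO, hOS⟩ := isOpen_induced_iff.1 h
  refine isOpen_induced_iff.2 ⟨Subtype.val '' S, ?_, preimage_image_eq _ Subtype.val_injective⟩
  refine isQuotientMap_quotient_mk'.isOpen_preimage.1 ?_
  refine isOpen_iff_mem_nhds.2 ?_
  rintro ⟨w₀, hw₀⟩ ⟨z, hz, e⟩
  have hF₀ : F w₀ ≠ 0 := (mk_mem_U hw₀).1 ((congrArg (· ∈ U) e).mp z.2)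
  obtain ⟨c, hc⟩ : ∃ c, c ^ 2 = form w₀ := IsAlgClosed.exists_pow_nat_eq _ two_pos
  have hc0 : c ≠ 0 := by
    rintro rfl
    exact form_ne_zero hF₀ (by simp [← hc])
  let s : (Fin 3 → ℂ) → ℂ := fun w ↦ c * (form w / form w₀) ^ ((2 : ℕ) : ℂ)⁻¹
  have hs : ∀ w, s w ^ 2 = form w := fun w ↦ by
    simp only [s]
    rw [mul_pow, Complex.cpow_nat_inv_pow _ two_ne_zero, hc]
    field_simp [form_ne_zero hF₀]
  have hs₀ : s w₀ = c := by simp [s, form_ne_zero hF₀]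
  have hsc : ContinuousAt s w₀ := by
    refine continuousAt_const.mul (ContinuousAt.cpow
      (continuous_form.continuousAt.div_const _) continuousAt_const ?_)
    rw [div_self (form_ne_zero hF₀)]
    exact Complex.one_mem_slitPlane
  obtain ⟨x, hx, hxU⟩ := exists_toU_eq hw₀ hF₀ hc
  have hxS : x ∈ toU ⁻¹' S := by
    have : x.toU = z := Subtype.ext (hxU.trans e.symm)
    rwa [mem_preimage, this]
  have hxO : coords ((s w₀)⁻¹ • w₀) ∈ O := by
    rw [hs₀, ← hx]
    rwa [← hOS] at hxS
  have hcont : ContinuousAt (fun w ↦ coords ((s w)⁻¹ • w)) w₀ := by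
    have : Continuous coords := by unfold coords; fun_prop
    refine this.continuousAt.comp ?_
    exact (hsc.inv₀ (by rwa [hs₀])).smul continuousAt_id
  have ev := (hcont.eventually (hO.mem_nhds hxO)).and
    (continuous_F.continuousAt.eventually_ne hF₀)
  refine (continuous_subtype_val.continuousAt (x := (⟨w₀, hw₀⟩ : {w : Fin 3 → ℂ // w ≠ 0}))
    |>.eventually ev).mono ?_
  rintro ⟨w, hw⟩ ⟨h1, h2⟩
  obtain ⟨x', hx', hxU'⟩ := exists_toU_eq hw h2 (hs w)
  refine ⟨x'.toU, ?_, hxU'⟩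
  change x' ∈ toU ⁻¹' S
  rw [← hOS, mem_preimage, hx']
  exact h1

theorem isQuotientCoveringMap_toU : IsQuotientCoveringMap toU ℤˣ where
  __ := isQuotientMap_toU
  continuous_const_smul g := by
    simp only [units_smul_eq]
    split_ifs <;> fun_prop
  apply_eq_iff_mem_orbit {x x'} := by
    rw [toU_eq_iff, MulAction.mem_orbit_iff]
    constructor
    · rintro (rfl | rfl)
      · exact ⟨1, one_smul _ _⟩
      · exact ⟨-1, by rw [units_smul_eq, if_neg (by decide)]⟩
    · rintro ⟨g, rfl⟩
      rw [units_smul_eq]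
      split_ifs <;> simp
  disjoint x := by
    obtain ⟨O, O', hO, hO', hx, hx', hd⟩ := t2_separation x.ne_neg
    refine ⟨O ∩ (fun x ↦ -x) ⁻¹' O', (hO.inter (hO'.preimage DoubleCover.continuous_neg)).mem_nhds
      ⟨hx, hx'⟩, ?_⟩
    rintro g ⟨_, ⟨z, hz, rfl⟩, hz'⟩
    by_contra hg
    simp only [units_smul_eq, if_neg hg] at hz'
    exact disjoint_left.1 hd hz'.1 hz.2

theorem isCoveringMap_toU : IsCoveringMap toU := isQuotientCoveringMap_toU.isCoveringMap

end DoubleCover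

section Monodromy

variable {G : Type*} [Group G]

/-- The transition function between the two charts of the monodromy covering. -/
noncomputable def transition (a c : G) (y : ℂ) : G :=
  open Classical in
  if 0 < y.im ∧ y.re < 0 then a else if y.im < 0 ∧ 0 < y.re then c * a * c else 1

theorem transition_eventuallyEq (a c : G) {y : ℂ} (hre : y.re ≠ 0) (him : y.im ≠ 0) :
    ∀ᶠ z in 𝓝 y, transition a c z = transition a c y := by
  have re_lt (h : y.re < 0) : ∀ᶠ z in 𝓝 y, z.re < 0 :=
    Complex.continuous_re.continuousAt.eventually (gt_mem_nhds h)
  have lt_re (h : 0 < y.re) : ∀ᶠ z in 𝓝 y, 0 < z.re :=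
    Complex.continuous_re.continuousAt.eventually (lt_mem_nhds h)
  have im_lt (h : y.im < 0) : ∀ᶠ z in 𝓝 y, z.im < 0 :=
    Complex.continuous_im.continuousAt.eventually (gt_mem_nhds h)
  have lt_im (h : 0 < y.im) : ∀ᶠ z in 𝓝 y, 0 < z.im :=
    Complex.continuous_im.continuousAt.eventually (lt_mem_nhds h)
  rcases hre.lt_or_gt with h | h <;> rcases him.lt_or_gt with h' | h'
  · filter_upwards [re_lt h, im_lt h'] with z hz hz'
    simp [transition, h.not_gt, h'.not_gt, hz.not_gt, hz'.not_gt]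
  · filter_upwards [re_lt h, lt_im h'] with z hz hz'
    simp [transition, h, h', hz, hz']
  · filter_upwards [lt_re h, im_lt h'] with z hz hz'
    simp [transition, h, h', hz, hz', h.not_gt, hz.not_gt]
  · filter_upwards [lt_re h, lt_im h'] with z hz hz'
    simp [transition, h.not_gt, h'.not_gt, hz.not_gt, hz'.not_gt]

/-- The base sets of the two charts of the monodromy covering. -/
def chart : Bool → Set ℂ
  | false => {y | |y.im| < 1 + |y.re|}
  | true => {y | 1 < |y.im|}

theorem isOpen_chart : ∀ i, IsOpen (chart i)
  | false => isOpen_lt (by fun_prop) (by fun_prop)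
  | true => isOpen_lt (by fun_prop) (by fun_prop)

theorem mem_chart_true {y : ℂ} (hy : y ^ 2 + 1 ≠ 0) (h : y ∉ chart false) : y ∈ chart true := by
  rw [sq_add_one_ne_zero_iff] at hy
  by_contra h'
  simp only [chart, mem_ofPred_eq, not_lt] at h h'
  have h0 := abs_nonneg y.re
  have hre : y.re = 0 := abs_eq_zero.1 (by linarith)
  have him : |y.im| = 1 := by linarith
  rcases eq_or_eq_neg_of_abs_eq him with h1 | h1
  · exact hy.1 (Complex.ext hre h1)
  · exact hy.2 (Complex.ext (by simpa using hre) (by simpa using h1))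

theorem re_im_ne_zero_of_mem_chart {y : ℂ} (h : y ∈ chart false) (h' : y ∈ chart true) :
    y.re ≠ 0 ∧ y.im ≠ 0 := by
  simp only [chart, mem_ofPred_eq] at h h'
  constructor
  · intro h0
    rw [h0, abs_zero] at h
    linarith
  · intro h0
    rw [h0, abs_zero] at h'
    linarith

/-- The frame of the monodromy covering in each chart, relative to the chart `false`. -/
noncomputable def frame (a c : G) : Bool → ℂ → G
  | false => fun _ ↦ 1
  | true => transition a c

theorem frame_eventuallyEq (a c : G) {i j : Bool} {y : ℂ} (hi : y ∈ chart i) (hj : y ∈ chart j) :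
    ∀ᶠ z in 𝓝 y, frame a c j z * (frame a c i z)⁻¹ = frame a c j y * (frame a c i y)⁻¹ := by
  rcases i with - | - <;> rcases j with - | -
  · simp [frame]
  · obtain ⟨h, h'⟩ := re_im_ne_zero_of_mem_chart hi hj
    filter_upwards [transition_eventuallyEq a c h h'] with z hz
    simp [frame, hz]
  · obtain ⟨h, h'⟩ := re_im_ne_zero_of_mem_chart hj hi
    filter_upwards [transition_eventuallyEq a c h h'] with z hz
    simp [frame, hz]
  · simp

theorem transition_rightPt (a c : G) : transition a c rightPt.y = 1 := by
  norm_num [transition, rightPt, right]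

theorem transition_leftPt (a c : G) : transition a c leftPt.y = a := by
  norm_num [transition, leftPt, left]

theorem transition_neg_rightPt (a c : G) : transition a c (-rightPt).y = 1 := by
  norm_num [transition, rightPt, right]

theorem transition_neg_leftPt (a c : G) : transition a c (-leftPt).y = c * a * c := by
  norm_num [transition, leftPt, left]

variable [TopologicalSpace G] [DiscreteTopology G]

/-- The covering of the double cover with fibre `G` in which the loop around `I` acts by `a`
and the loop around `-I` acts by `c * a * c`. -/
noncomputable def monodromyCore (a c : G) : FiberBundleCore Bool DoubleCover G where
  baseSet i := DoubleCover.y ⁻¹' chart i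
  isOpen_baseSet i := (isOpen_chart i).preimage continuous_y
  indexAt x := open Classical in if x.y ∈ chart false then false else true
  mem_baseSet_at x := by
    split_ifs with h
    · exact h
    · exact mem_chart_true x.y_sq_add_one_ne_zero h
  coordChange i j x g := frame a c j x.y * (frame a c i x.y)⁻¹ * g
  coordChange_self i x _ g := by simp
  continuousOn_coordChange i j := by
    rintro ⟨x, g⟩ ⟨⟨hi, hj⟩, -⟩
    refine ContinuousAt.continuousWithinAt ?_
    refine (continuousAt_const (y := frame a c j x.y * (frame a c i x.y)⁻¹)).mul
      continuousAt_snd |>.congr ?_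
    have := (continuous_y.comp continuous_fst).continuousAt (x := (x, g)) |>.eventually
      (frame_eventuallyEq a c hi hj)
    filter_upwards [this] with z hz
    simp only [Function.comp_apply] at hz
    rw [hz]
    rfl
  coordChange_comp i j k x _ g := by group

/-- The total space of the monodromy covering. -/
abbrev MonodromyCover (a c : G) : Type _ := (monodromyCore a c).TotalSpace

theorem isCoveringMap_proj (a c : G) : IsCoveringMap (monodromyCore a c).proj :=
  FiberBundle.isCoveringMap

/-- `Lifts a c p g g'` means that `p` lifts to a path from `g` to `g'` in the monodromy
covering. -/
def Lifts (a c : G) {x x' : DoubleCover} (p : Path x x') (g g' : G) : Prop :=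
  ∃ P : Path (⟨x, g⟩ : MonodromyCover a c) ⟨x', g'⟩, ∀ t, (P t).proj = p t

variable {a c : G}

theorem Lifts.trans {x x' x'' : DoubleCover} {p : Path x x'} {p' : Path x' x''} {g g' g'' : G}
    (h : Lifts a c p g g') (h' : Lifts a c p' g' g'') : Lifts a c (p.trans p') g g'' := by
  obtain ⟨P, hP⟩ := h
  obtain ⟨P', hP'⟩ := h'
  refine ⟨P.trans P', fun t ↦ ?_⟩
  simp only [Path.trans_apply]
  split_ifs
  · exact hP _
  · exact hP' _

theorem Lifts.symm {x x' : DoubleCover} {p : Path x x'} {g g' : G}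
    (h : Lifts a c p g g') : Lifts a c p.symm g' g := by
  obtain ⟨P, hP⟩ := h
  exact ⟨P.symm, fun t ↦ hP _⟩

theorem exists_lift (i : Bool) {x x' : DoubleCover} (p : Path x x') (hp : ∀ t, (p t).y ∈ chart i)
    (hx : x.y ∈ chart false) (hx' : x'.y ∈ chart false) (g : G) :
    Lifts a c p ((frame a c i x.y)⁻¹ * g) ((frame a c i x'.y)⁻¹ * g) := by
  let e := (monodromyCore a c).localTriv i
  have he : ∀ z g, e.toOpenPartialHomeomorph.symm (z, g) = (⟨z, frame a c
      ((monodromyCore a c).indexAt z) z.y * (frame a c i z.y)⁻¹ * g⟩ : MonodromyCover a c) :=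
    fun z g ↦ (monodromyCore a c).localTriv_symm_apply i (z, g)
  have hidx : ∀ z : DoubleCover, z.y ∈ chart false →
      frame a c ((monodromyCore a c).indexAt z) z.y = 1 := by
    intro z hz
    simp [monodromyCore, hz, frame]
  refine ⟨⟨⟨fun t ↦ e.toOpenPartialHomeomorph.symm (p t, g), ?_⟩, ?_, ?_⟩, fun t ↦ ?_⟩
  · refine e.toOpenPartialHomeomorph.continuousOn_symm.comp_continuous (by fun_prop) fun t ↦ ?_
    exact e.mem_target.2 (hp t)
  · simp [he, hidx _ hx]
  · simp [he, hidx _ hx']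
  · simp [he]

theorem exists_lift_false {x x' : DoubleCover} (p : Path x x') (hp : ∀ t, (p t).y ∈ chart false)
    (g : G) : Lifts a c p g g := by
  simpa [frame] using exists_lift (a := a) (c := c) false p hp (by simpa using hp 0)
    (by simpa using hp 1) g

theorem exists_lift_true {x x' : DoubleCover} (p : Path x x') (hp : ∀ t, (p t).y ∈ chart true)
    (hx : x.y ∈ chart false) (hx' : x'.y ∈ chart false) (g : G) :
    Lifts a c p g ((transition a c x'.y)⁻¹ * transition a c x.y * g) := by
  simpa [frame, mul_assoc] using exists_lift (a := a) (c := c) true p hp hx hx'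
    (transition a c x.y * g)

theorem piece_zero_subset {y : ℂ} (h : y ∈ piece 0) : y ∈ chart false := by
  simp only [piece, sector, mem_inter_iff, mem_ofPred_eq] at h
  simp only [chart, mem_ofPred_eq, abs_lt]
  have := le_abs_self y.re
  constructor <;> linarith

theorem neg_mem_chart_false {y : ℂ} : -y ∈ chart false ↔ y ∈ chart false := by simp [chart]

theorem neg_mem_chart_true {y : ℂ} : -y ∈ chart true ↔ y ∈ chart true := by simp [chart]

theorem piece_one_subset {y : ℂ} (h : y ∈ piece 1) : y ∈ chart false :=
  neg_mem_chart_false.1 (piece_zero_subset h)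

theorem piece_two_subset {y : ℂ} (h : y ∈ piece 2) : y ∈ chart true :=
  lt_of_lt_of_le (show 1 < y.im from h) (le_abs_self _)

theorem rightPath_mem (t : I) : (rightPath t).y ∈ chart false :=
  piece_zero_subset (secPath_mem (convex_piece 0) zero_mem_zero right_mem_zero _ t)

theorem leftPath_mem (t : I) : (leftPath t).y ∈ chart false :=
  piece_one_subset (secPath_mem (convex_piece 1) zero_mem_one left_mem_one _ t)

theorem topPath_mem (t : I) : (topPath t).y ∈ chart true :=
  piece_two_subset (secPath_mem (convex_piece 2) right_mem_two left_mem_two _ t)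

theorem lifts_windingLoop (g : G) : Lifts a c windingLoop g (a * g) := by
  have h := (exists_lift_false (a := a) (c := c) leftPath leftPath_mem g).trans
    (exists_lift_true topPath.symm (fun t ↦ topPath_mem _) (piece_one_subset left_mem_one)
      (piece_zero_subset right_mem_zero) g)
  have := h.trans (exists_lift_false rightPath.symm (fun t ↦ rightPath_mem _) _)
  rwa [transition_rightPt, transition_leftPt, inv_one, one_mul] at this

theorem lifts_negPath_windingLoop (g : G) :
    Lifts a c (negPath windingLoop) g (c * a * c * g) := by
  have h := (exists_lift_false (a := a) (c := c) (negPath leftPath)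
    (fun t ↦ neg_mem_chart_false.2 (leftPath_mem t)) g).trans
    (exists_lift_true (negPath topPath).symm (fun t ↦ neg_mem_chart_true.2 (topPath_mem _))
      (neg_mem_chart_false.2 (piece_one_subset left_mem_one))
      (neg_mem_chart_false.2 (piece_zero_subset right_mem_zero)) g)
  have := h.trans (exists_lift_false (negPath rightPath).symm
    (fun t ↦ neg_mem_chart_false.2 (rightPath_mem _)) _)
  have e : negPath windingLoop = ((negPath leftPath).trans (negPath topPath).symm).trans
      (negPath rightPath).symm := by
    simp only [windingLoop, negPath, Path.map_trans]
    rfl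
  rw [e]
  rwa [transition_neg_rightPt, transition_neg_leftPt, inv_one, one_mul] at this

theorem lifts_halfTurn (g : G) : Lifts a c halfTurn g g :=
  exists_lift_false _ (fun t ↦ by rw [halfTurn_y]; exact piece_zero_subset zero_mem_zero) g

theorem lifts_negPath_halfTurn (g : G) : Lifts a c (negPath halfTurn) g g :=
  exists_lift_false _ (fun t ↦ by
    rw [negPath_apply, neg_y, halfTurn_y]
    exact neg_mem_chart_false.2 (piece_zero_subset zero_mem_zero)) g

end Monodromy

theorem joined_basePt (x : DoubleCover) : Joined basePt x := by
  obtain ⟨i, hi⟩ := exists_mem_piece x.y_sq_add_one_ne_zero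
  suffices Joined (pieceBase i) x from ⟨(pathToPieceBase i).trans this.somePath⟩
  fin_cases i
  · have := simplyConnectedSpace_sector 1 (by norm_num)
    have h : IsPathConnected {x : DoubleCover | 1 * x.y ∈ sector} :=
      isPathConnected_iff_pathConnectedSpace.2 inferInstance
    exact (h.joinedIn basePt (by simpa [basePt, piece] using zero_mem_zero) x
      (by simpa [piece] using hi)).joined
  · have := simplyConnectedSpace_sector (-1) (by norm_num)
    have h : IsPathConnected {x : DoubleCover | -1 * x.y ∈ sector} :=
      isPathConnected_iff_pathConnectedSpace.2 inferInstance
    exact (h.joinedIn basePt (by simpa [basePt, piece] using zero_mem_one) x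
      (by simpa [piece] using hi)).joined
  · exact (joinedIn_preimage_convex (convex_piece 2)
      (fun y hy ↦ sq_ne_one_of_mem_piece hy (by simp) (by simp))
      (fun y hy ↦ sq_add_one_ne_zero_of_mem_piece hy) (x := rightPt) right_mem_two hi).joined
  · exact (joinedIn_preimage_convex (convex_piece 3)
      (fun y hy ↦ sq_ne_one_of_mem_piece hy (by simp) (by simp))
      (fun y hy ↦ sq_add_one_ne_zero_of_mem_piece hy) (x := -rightPt) neg_right_mem_three
      hi).joined

instance : PathConnectedSpace DoubleCover :=
  ⟨⟨basePt⟩, fun x x' ↦ (joined_basePt x).symm.trans (joined_basePt x')⟩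

instance : PathConnectedSpace U := surjective_toU.pathConnectedSpace continuous_toU

/-- The image in `U` of a path between points over the base point. -/
noncomputable def loopOf {x x' : DoubleCover} (p : Path x x') (hx : x.toU = basePt.toU)
    (hx' : x'.toU = basePt.toU) : Path basePt.toU basePt.toU :=
  (p.map continuous_toU).cast hx.symm hx'.symm

theorem loopOf_trans {x x' x'' : DoubleCover} (p : Path x x') (p' : Path x' x'') (hx hx' hx'') :
    loopOf (p.trans p') hx hx'' = (loopOf p hx hx').trans (loopOf p' hx' hx'') := by
  ext t
  simp only [loopOf, Path.trans_apply, Path.cast_coe, Path.map_coe, Function.comp_apply]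
  split_ifs <;> rfl

theorem loopOf_negPath {x x' : DoubleCover} (p : Path x x') (hx hx' hx₁ hx₁') :
    loopOf (negPath p) hx₁ hx₁' = loopOf p hx hx' := by
  ext t
  exact congrArg Subtype.val (toU_neg (p t))

theorem toU_neg_basePt : (-basePt).toU = basePt.toU := toU_neg _

/-- The class in the fundamental group of `U` of a path between points over the base point. -/
noncomputable def classOf {x x' : DoubleCover} (p : Path x x') (hx : x.toU = basePt.toU)
    (hx' : x'.toU = basePt.toU) : FundamentalGroup U basePt.toU :=
  FundamentalGroup.fromPath (.mk (loopOf p hx hx'))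

theorem classOf_trans {x x' x'' : DoubleCover} (p : Path x x') (p' : Path x' x'') (hx hx' hx'') :
    classOf (p.trans p') hx hx'' = classOf p' hx' hx'' * classOf p hx hx' := by
  rw [classOf, loopOf_trans p p' hx hx' hx'']
  rfl

theorem classOf_symm {x x' : DoubleCover} (p : Path x x') (hx hx') :
    classOf p.symm hx' hx = (classOf p hx hx')⁻¹ := rfl

theorem classOf_negPath {x x' : DoubleCover} (p : Path x x') (hx hx' hx₁ hx₁') :
    classOf (negPath p) hx₁ hx₁' = classOf p hx hx' := by
  rw [classOf, loopOf_negPath p hx hx']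
  rfl

/-- The class of the loop winding once around the second conic. -/
noncomputable def windingClass : FundamentalGroup U basePt.toU := classOf windingLoop rfl rfl

/-- The class of the image of the half turn. -/
noncomputable def halfTurnClass : FundamentalGroup U basePt.toU :=
  classOf halfTurn rfl toU_neg_basePt

theorem halfTurnClass_mul_self : halfTurnClass * halfTurnClass = 1 := by
  let q : Path basePt basePt := (halfTurn.trans (negPath halfTurn)).cast rfl (neg_neg' _).symm
  have hq : Path.Homotopic.Quotient.mk q = .mk (Path.refl _) :=
    sector_mk_eq_mk q (Path.refl _) (i := 0) (by decide)
      (forall_trans_mem (S := DoubleCover.y ⁻¹' piece 0)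
        (fun t ↦ by rw [mem_preimage, halfTurn_y]; exact zero_mem_zero)
        (fun t ↦ by
          rw [mem_preimage, negPath_apply, neg_y, halfTurn_y, neg_zero]; exact zero_mem_zero))
      fun t ↦ zero_mem_zero
  have h : classOf q rfl rfl = 1 := by
    have := congrArg (fun z ↦ FundamentalGroup.fromPath (z.map ⟨toU, continuous_toU⟩)) hq
    exact this
  rw [← h]
  exact ((classOf_trans halfTurn (negPath halfTurn) rfl toU_neg_basePt
    ((toU_neg _).trans toU_neg_basePt)).trans
      (congrArg (· * halfTurnClass) (classOf_negPath halfTurn rfl toU_neg_basePt _ _))).symm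

/-- The fundamental group of `U` is generated by `windingClass` and `halfTurnClass`. -/
theorem eq_top_of_windingClass_mem {H : Subgroup (FundamentalGroup U basePt.toU)}
    (h₁ : windingClass ∈ H) (h₂ : halfTurnClass ∈ H) : H = ⊤ := by
  have key : ∀ p : Path basePt basePt, classOf p rfl rfl ∈ H := by
    have := subgroup_eq_top
      (H.comap (FundamentalGroup.map ⟨toU, continuous_toU⟩ basePt)) h₁ (by
        have : classOf ((halfTurn.trans (negPath windingLoop)).trans halfTurn.symm) rfl rfl ∈
            H := by
          rw [classOf_trans _ _ rfl toU_neg_basePt, classOf_trans _ _ rfl toU_neg_basePt,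
            classOf_symm _ rfl toU_neg_basePt, classOf_negPath _ rfl rfl]
          exact H.mul_mem (H.inv_mem h₂) (H.mul_mem h₁ h₂)
        exact this)
    intro p
    exact (congrArg (FundamentalGroup.fromPath (.mk p) ∈ ·) this).mpr trivial
  refine eq_top_iff.2 fun γ _ ↦ ?_
  obtain ⟨ω, rfl⟩ := Path.Homotopic.Quotient.mk_surjective γ
  obtain ⟨P, hP, hP₀⟩ := isCoveringMap_toU.exists_path_lifts ω.toContinuousMap basePt (by simp)
  have lift : ∀ x, P 1 = x → ∃ p : Path basePt x, ∀ t, (p t).toU = ω t :=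
    fun x hx ↦ ⟨⟨P, hP₀, hx⟩, fun t ↦ congrFun hP t⟩
  have h1 : (P 1).toU = basePt.toU := (congrFun hP 1).trans ω.target
  rcases toU_eq_iff.1 h1 with h1 | h1
  · obtain ⟨p, hp⟩ := lift _ h1
    have : loopOf p rfl rfl = ω := Path.ext (funext hp)
    rw [← this]
    exact key p
  · obtain ⟨p, hp⟩ := lift _ h1
    have : loopOf p rfl toU_neg_basePt = ω := Path.ext (funext hp)
    rw [← this]
    have h := key (p.trans halfTurn.symm)
    rw [classOf_trans _ _ rfl toU_neg_basePt, classOf_symm _ rfl toU_neg_basePt] at h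
    exact (H.mul_mem_cancel_left (H.inv_mem h₂)).1 h

section Moves

variable {G : Type*} [Group G] [TopologicalSpace G] [DiscreteTopology G] {a c : G}

/-- The two points of the double cover over the base point. -/
noncomputable def sheet : Bool → DoubleCover
  | false => basePt
  | true => -basePt

theorem toU_sheet : ∀ i, (sheet i).toU = basePt.toU
  | false => rfl
  | true => toU_neg_basePt

/-- The labels identifying the fibres over the two sheets. -/
def label (c : G) : Bool → G
  | false => 1
  | true => c

/-- `Moves a c γ i i' g g'` means that a path between two sheets in the class `γ` lifts to the
monodromy covering, from the point labelled `g` to the point labelled `g'`. -/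
def Moves (a c : G) (γ : FundamentalGroup U basePt.toU) (i i' : Bool) (g g' : G) : Prop :=
  ∃ p : Path (sheet i) (sheet i'), classOf p (toU_sheet i) (toU_sheet i') = γ ∧
    Lifts a c p (label c i * g) (label c i' * g')

/-- `Acts a c γ g` means that `γ` acts on the labels of the monodromy covering as left
multiplication by `g`, permuting the sheets. -/
def Acts (a c : G) (γ : FundamentalGroup U basePt.toU) (g : G) : Prop :=
  ∃ e : Equiv.Perm Bool, ∀ i h, Moves a c γ i (e i) h (g * h)

theorem acts_one : Acts a c 1 1 :=
  ⟨1, fun i h ↦ ⟨Path.refl _,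
    congrArg (fun ω ↦ FundamentalGroup.fromPath (.mk ω)) (Path.ext (funext fun _ ↦ toU_sheet i)),
    (Path.refl _).cast rfl (by simp), fun t ↦ rfl⟩⟩

theorem Acts.mul {γ γ' : FundamentalGroup U basePt.toU} {g g' : G} (h' : Acts a c γ' g')
    (h : Acts a c γ g) : Acts a c (γ' * γ) (g' * g) := by
  obtain ⟨e, he⟩ := h
  obtain ⟨e', he'⟩ := h'
  refine ⟨e' * e, fun i k ↦ ?_⟩
  obtain ⟨p, hp, hl⟩ := he i k
  obtain ⟨p', hp', hl'⟩ := he' (e i) (g * k)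
  refine ⟨p.trans p', ?_, ?_⟩
  · rw [← hp, ← hp']
    exact classOf_trans p p' _ _ _
  · rw [mul_assoc g']
    exact hl.trans hl'

theorem Acts.inv {γ : FundamentalGroup U basePt.toU} {g : G} (h : Acts a c γ g) :
    Acts a c γ⁻¹ g⁻¹ := by
  obtain ⟨e, he⟩ := h
  refine ⟨e.symm, fun i k ↦ ?_⟩
  have := he (e.symm i) (g⁻¹ * k)
  rw [Equiv.apply_symm_apply, mul_inv_cancel_left] at this
  obtain ⟨p, hp, hl⟩ := this
  refine ⟨p.symm, ?_, hl.symm⟩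
  rw [← hp]
  exact classOf_symm p _ _

theorem acts_windingClass (hc : c * c = 1) : Acts a c windingClass a := by
  refine ⟨1, fun i h ↦ ?_⟩
  cases i
  · refine ⟨windingLoop, rfl, ?_⟩
    change Lifts a c windingLoop (1 * h) (1 * (a * h))
    rw [one_mul, one_mul]
    exact lifts_windingLoop h
  · refine ⟨negPath windingLoop, classOf_negPath _ _ _ _ _, ?_⟩
    have := lifts_negPath_windingLoop (a := a) (c := c) (c * h)
    rwa [show c * a * c * (c * h) = c * (a * h) by
      rw [mul_assoc, ← mul_assoc c c, hc, one_mul, mul_assoc]] at this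

theorem Lifts.cast_right {x x' x'' : DoubleCover} {p : Path x x'} {g g' : G} (h : Lifts a c p g g')
    (hx : x'' = x') : Lifts a c (p.cast rfl hx) g g' := by
  subst hx
  exact h

theorem acts_halfTurnClass (hc : c * c = 1) : Acts a c halfTurnClass c := by
  refine ⟨Equiv.boolNot, fun i h ↦ ?_⟩
  cases i
  · refine ⟨halfTurn, rfl, ?_⟩
    simp only [label, Equiv.boolNot_apply, Bool.not_false, ← mul_assoc, hc, one_mul]
    exact lifts_halfTurn h
  · refine ⟨(negPath halfTurn).cast rfl (neg_neg' _).symm, ?_, ?_⟩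
    · exact classOf_negPath halfTurn rfl toU_neg_basePt toU_neg_basePt
        ((toU_neg _).trans toU_neg_basePt)
    · simp only [label, Equiv.boolNot_apply, Bool.not_true, one_mul]
      exact (lifts_negPath_halfTurn (c * h)).cast_right (neg_neg' _).symm

theorem homotopicRel_const_of_isCoveringMap {E X : Type*} [TopologicalSpace E] [TopologicalSpace X]
    {f : E → X} (cov : IsCoveringMap f) {P : C(I, E)} {e : E} (he : P 0 = e)
    (h : ((⟨f, cov.continuous⟩ : C(E, X)).comp P).HomotopicRel (.const I (f e)) {0, 1}) :
    P.HomotopicRel (.const I e) {0, 1} :=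
  (cov.homotopicRel_iff_comp (f₁ := .const I e) ⟨0, by simp, he⟩).2 h

theorem Moves.eq_of_one {i : Bool} {g : G} (h : Moves a c 1 false i 1 g) : g = 1 := by
  obtain ⟨p, hp, P, hP⟩ := h
  have h0 : (loopOf p (toU_sheet _) (toU_sheet _)).Homotopic (Path.refl _) :=
    Path.Homotopic.Quotient.eq.1 hp
  have h1 : p.toContinuousMap.HomotopicRel (.const I basePt) {0, 1} :=
    homotopicRel_const_of_isCoveringMap isCoveringMap_toU p.source h0
  have h2 : P.toContinuousMap.HomotopicRel (.const I ⟨sheet false, label c false * 1⟩) {0, 1} := by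
    refine homotopicRel_const_of_isCoveringMap (isCoveringMap_proj a c) P.source ?_
    have : (⟨_, (isCoveringMap_proj a c).continuous⟩ : C(MonodromyCover a c, DoubleCover)).comp
        P.toContinuousMap = p.toContinuousMap := ContinuousMap.ext hP
    rw [this]
    exact h1
  obtain ⟨H⟩ := h2
  have e := H.fst_eq_snd (x := 1) (by simp)
  have e' : (⟨sheet i, label c i * g⟩ : MonodromyCover a c) = ⟨sheet false, label c false * 1⟩ :=
    P.target.symm.trans e
  cases i
  · have : 1 * g = 1 * 1 := congrArg (fun z : MonodromyCover a c ↦ (show G from z.2)) e'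
    simpa using this
  · exact absurd (congrArg Bundle.TotalSpace.proj e').symm (ne_neg _)

end Moves

/-- A group generated by `a` and an involution `c` is isomorphic to the fundamental group of `U`
as soon as it has a homomorphism sending `a` to `windingClass` and `c` to `halfTurnClass`. -/
theorem bijective_of_closure_eq_top {G : Type*} [Group G] {a c : G} (hc : c * c = 1)
    (hac : Subgroup.closure {a, c} = ⊤) (ψ : G →* FundamentalGroup U basePt.toU)
    (ha : ψ a = windingClass) (hc' : ψ c = halfTurnClass) : Function.Bijective ψ := by
  let _ : TopologicalSpace G := ⊥
  have : DiscreteTopology G := ⟨rfl⟩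
  constructor
  · refine (injective_iff_map_eq_one ψ).2 fun g hg ↦ ?_
    have key : Acts a c (ψ g) g := by
      clear hg
      have hg : g ∈ Subgroup.closure {a, c} := hac ▸ Subgroup.mem_top g
      induction hg using Subgroup.closure_induction with
      | mem x hx =>
        rcases hx with rfl | rfl
        · rw [ha]; exact acts_windingClass hc
        · rw [hc']; exact acts_halfTurnClass hc
      | one => rw [map_one]; exact acts_one
      | mul x y _ _ hx hy => rw [map_mul]; exact hx.mul hy
      | inv x _ hx => rw [map_inv]; exact hx.inv
    obtain ⟨e, he⟩ := key
    have := he false 1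
    rw [hg, mul_one] at this
    exact this.eq_of_one
  · exact MonoidHom.range_eq_top.1 (eq_top_of_windingClass_mem ⟨a, ha⟩ ⟨c, hc'⟩)

theorem lift_eq_one {K : Type*} [Group K] {x y : K} (hy : y * y = 1) :
    ∀ r ∈ rels, FreeGroup.lift ![x, x⁻¹ * y] r = 1 := by
  rintro r (rfl | rfl)
  · simp [pow_two, hy]
  · have : (x⁻¹ * y * x) ^ 2 = x⁻¹ * (y * y) * x := by
      rw [pow_two]; group
    simpa [hy] using this

theorem toGroup_mul_eq {K : Type*} [Group K] {x y : K} (hy : y * y = 1) :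
    PresentedGroup.toGroup (lift_eq_one (x := x) hy)
      (PresentedGroup.of 0 * PresentedGroup.of 1) = y := by
  simp

/-- The homomorphism from the presented group sending the first generator to `windingClass`. -/
noncomputable def fromPresented : PresentedGroup rels →* FundamentalGroup U basePt.toU :=
  PresentedGroup.toGroup (lift_eq_one (x := windingClass) halfTurnClass_mul_self)

theorem bijective_fromPresented : Function.Bijective fromPresented := by
  let a : PresentedGroup rels := PresentedGroup.of 0
  let b : PresentedGroup rels := PresentedGroup.of 1
  refine bijective_of_closure_eq_top (a := a) (c := a * b) ?_ ?_ fromPresented ?_ ?_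
  · rw [← pow_two]
    exact PresentedGroup.one_of_mem (rels := rels) (.inl rfl)
  · rw [eq_top_iff, ← PresentedGroup.closure_range_of, Subgroup.closure_le]
    have ha : a ∈ Subgroup.closure {a, a * b} := Subgroup.subset_closure (by simp)
    have hab : a * b ∈ Subgroup.closure {a, a * b} := Subgroup.subset_closure (by simp)
    rintro _ ⟨i, rfl⟩
    fin_cases i
    · exact ha
    · exact (Subgroup.mul_mem_cancel_left _ ha).1 hab
  · simp [fromPresented, a]
  · exact toGroup_mul_eq halfTurnClass_mul_self

end TangentConics

theorem pi1_two_tangent_conics (u : U) :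
    Nonempty (FundamentalGroup U u ≃* PresentedGroup rels) :=
  ⟨(FundamentalGroup.fundamentalGroupMulEquivOfPathConnected u _).trans
    (MulEquiv.ofBijective _ TangentConics.bijective_fromPresented).symm⟩
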